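/- If the item at position 0 of a valid layout ℓ is V, then ℓ is not deserializable. -/

import Mathlib

/-- A layout item: fixed-length field, variable-length field, or pointer `P o s`
with offset `o` and span `s`. -/
inductive Item : Type where
  | F : Item
  | V : Item
  | P : ℕ → ℕ → Item
deriving DecidableEq

/-- A layout is valid if every pointer `P o s` occurring in it satisfies
`o < |ℓ|` and `s ≤ |ℓ| - o`. -/
def ValidLayout (ℓ : List Item) : Prop :=
  ∀ o s : ℕ, Item.P o s ∈ ℓ → o < ℓ.length ∧ s ≤ ℓ.length - o

/-- Facts the parser can know about positions of the layout. -/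
inductive ParseFact : Type where
  | Beg : ℕ → ParseFact
  | Len : ℕ → ParseFact
  | Val : ℕ → ParseFact
deriving DecidableEq

/-- The smallest set of facts closed under the parser's inference rules. -/
inductive Derivable (ℓ : List Item) : ParseFact → Prop where
  | begin : Derivable ℓ (.Beg 0)
  | fieldF (i : ℕ) : ℓ[i]? = some .F → Derivable ℓ (.Len i)
  | fieldP (i o s : ℕ) : ℓ[i]? = some (.P o s) → Derivable ℓ (.Len i)
  | forwardVal (i : ℕ) : Derivable ℓ (.Beg i) → Derivable ℓ (.Len i) → Derivable ℓ (.Val i)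
  | forwardBeg (i : ℕ) : Derivable ℓ (.Beg i) → Derivable ℓ (.Len i) → Derivable ℓ (.Beg (i+1))
  | backwardBeg (i : ℕ) : Derivable ℓ (.Beg (i+1)) → Derivable ℓ (.Len i) → Derivable ℓ (.Beg i)
  | backwardVal (i : ℕ) : Derivable ℓ (.Beg (i+1)) → Derivable ℓ (.Len i) → Derivable ℓ (.Val i)
  | join (i : ℕ) : Derivable ℓ (.Beg i) → Derivable ℓ (.Beg (i+1)) → Derivable ℓ (.Len i)
  | jumpRight (i o s : ℕ) : ℓ[i]? = some (.P o s) → Derivable ℓ (.Val i) →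
      Derivable ℓ (.Beg o) → Derivable ℓ (.Beg (o+s))
  | jumpLeft (i o s : ℕ) : ℓ[i]? = some (.P o s) → Derivable ℓ (.Val i) →
      Derivable ℓ (.Beg (o+s)) → Derivable ℓ (.Beg o)

/-- A layout is deserializable if the length of every varfield is derivable. -/
def Deserializable (ℓ : List Item) : Prop :=
  ∀ j : ℕ, ℓ[j]? = some Item.V → Derivable ℓ (.Len j)

/-- The facts that the parser reads off the layout `ℓ` outright: the conclusions of the rules
Begin and Field, which have no derivable fact among their premises. -/
inductive Immediate (ℓ : List Item) : ParseFact → Prop where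
  | beg_zero : Immediate ℓ (.Beg 0)
  | len_of_fixed {i : ℕ} : ℓ[i]? = some .F → Immediate ℓ (.Len i)
  | len_of_pointer {i o s : ℕ} : ℓ[i]? = some (.P o s) → Immediate ℓ (.Len i)

section

variable {ℓ : List Item} {f : ParseFact}

theorem Immediate.derivable (hf : Immediate ℓ f) : Derivable ℓ f := by
  cases hf with
  | beg_zero => exact .begin
  | len_of_fixed hi => exact .fieldF _ hi
  | len_of_pointer hi => exact .fieldP _ _ _ hi

theorem Immediate.eq_zero_of_beg {i : ℕ} (hi : Immediate ℓ (.Beg i)) : i = 0 := by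
  cases hi
  rfl

theorem not_immediate_val (i : ℕ) : ¬ Immediate ℓ (.Val i) := nofun

-- The only immediate beginning is `Beg 0`, so no other rule fires: Forward would need `Len 0`,
-- Backward and Join some `Beg (i + 1)`, and the jumps some `Val i`.
theorem Derivable.immediate (h0 : ¬ Immediate ℓ (.Len 0)) (hf : Derivable ℓ f) :
    Immediate ℓ f := by
  induction hf with
  | begin => exact .beg_zero
  | fieldF _ hi => exact .len_of_fixed hi
  | fieldP _ _ _ hi => exact .len_of_pointer hi
  | forwardVal _ _ _ hbeg hlen | forwardBeg _ _ _ hbeg hlen =>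
    obtain rfl := hbeg.eq_zero_of_beg
    exact absurd hlen h0
  | backwardBeg i _ _ hbeg _ | backwardVal i _ _ hbeg _ | join i _ _ _ hbeg =>
    exact absurd hbeg.eq_zero_of_beg i.succ_ne_zero
  | jumpRight i _ _ _ _ _ hval _ | jumpLeft i _ _ _ _ _ hval _ =>
    exact absurd hval (not_immediate_val i)

theorem derivable_len_zero_iff : Derivable ℓ (.Len 0) ↔ Immediate ℓ (.Len 0) :=
  ⟨fun hlen ↦ by_contra fun h0 ↦ h0 (hlen.immediate h0), Immediate.derivable⟩

theorem not_immediate_len_of_varfield {i : ℕ} (hi : ℓ[i]? = some .V) :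
    ¬ Immediate ℓ (.Len i) := by
  rintro (_ | hF | hP)
  · simp [hi] at hF
  · simp [hi] at hP

end

/-- If the first item of a valid layout is a varfield, the layout is not
deserializable. -/
theorem varfield_first_not_deserializable (ℓ : List Item) (hval : ValidLayout ℓ)
    (h0 : ℓ[0]? = some Item.V) : ¬ Deserializable ℓ := by
  intro hdes
  have hlen : Derivable ℓ (.Len 0) := hdes 0 h0
  exact not_immediate_len_of_varfield h0 (derivable_len_zero_iff.mp hlen)
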